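/- Every charming space X whose diagonal {(x,x) : x ∈ X} is a Gδ-subset of X × X is (2,2)-structured: there exists a subset Y of X such that Y with the subspace topology has a countable network, and for every open set U of X with Y ⊆ U, the set X \ U with the subspace topology has a countable network. -/

import Mathlib

open Set Function TopologicalSpace

universe u

/-- A map between topological spaces is *perfect* if it is continuous, closed, and
every fiber is compact. -/
def PerfectMap {Y : Type*} {Z : Type*} [TopologicalSpace Y] [TopologicalSpace Z]
    (f : Y → Z) : Prop :=
  Continuous f ∧ IsClosedMap f ∧ ∀ z : Z, IsCompact (f ⁻¹' {z})

/-- A topological space `X` is a *Lindelöf Σ-space* if there exist a topological space `Y`,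
a continuous surjection from `Y` onto `X`, and a perfect surjection from `Y` onto some
second-countable space. -/
def IsLindelofSigma (X : Type u) [TopologicalSpace X] : Prop :=
  ∃ (Y : Type u) (tY : TopologicalSpace Y) (Z : Type u) (tZ : TopologicalSpace Z),
    @SecondCountableTopology Z tZ ∧
    (∃ f : Y → X, @Continuous Y X tY _ f ∧ Surjective f) ∧
    (∃ g : Y → Z, @PerfectMap Y Z tY tZ g ∧ Surjective g)

/-- A topological space `X` is a *charming space* if there is a subset `Y` of `X` that is a
Lindelöf Σ-space in the subspace topology and such that for every open `U ⊇ Y`,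
the set `X \ U` is a Lindelöf Σ-space in the subspace topology. -/
def IsCharming (X : Type u) [TopologicalSpace X] : Prop :=
  ∃ Y : Set X, IsLindelofSigma Y ∧
    ∀ U : Set X, IsOpen U → Y ⊆ U → IsLindelofSigma ↥(Uᶜ)

/-- A *CL-charming* space: the shell `Y` can be chosen closed. -/
def IsCLCharming (X : Type u) [TopologicalSpace X] : Prop :=
  ∃ Y : Set X, IsClosed Y ∧ IsLindelofSigma Y ∧
    ∀ U : Set X, IsOpen U → Y ⊆ U → IsLindelofSigma ↥(Uᶜ)

/-- A *CO-charming* space: the shell `Y` can be chosen compact. -/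
def IsCOCharming (X : Type u) [TopologicalSpace X] : Prop :=
  ∃ Y : Set X, IsCompact Y ∧ IsLindelofSigma Y ∧
    ∀ U : Set X, IsOpen U → Y ⊆ U → IsLindelofSigma ↥(Uᶜ)

/-- A space has a *countable network* if there is a countable family `N` of subsets such that
every point in every open set `V` is contained in a member of `N` contained in `V`. -/
def HasCountableNetwork (X : Type u) [TopologicalSpace X] : Prop :=
  ∃ N : Set (Set X), N.Countable ∧
    ∀ x : X, ∀ V : Set X, IsOpen V → x ∈ V → ∃ n ∈ N, x ∈ n ∧ n ⊆ V

/-- A topological space `X` is *weak (4,4)-structured* if there exist a topological space `Y`,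
a continuous surjection from `Y` onto `X`, and a perfect surjection from `Y` onto some
charming space. -/
def IsWeak44Structured (X : Type u) [TopologicalSpace X] : Prop :=
  ∃ (Y : Type u) (tY : TopologicalSpace Y) (M : Type u) (tM : TopologicalSpace M),
    @IsCharming M tM ∧
    (∃ f : Y → X, @Continuous Y X tY _ f ∧ Surjective f) ∧
    (∃ g : Y → M, @PerfectMap Y M tY tM g ∧ Surjective g)

/-!
A Lindelöf Σ-space has a countable family which is a network up to compact sets: the images of the
preimages of a countable base. Such a family makes the space Lindelöf, so if `⋂ n, W n` is the
diagonal with every `W n` open, then for each `n` countably many open sets `G` with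
`G ×ˢ G ⊆ W n` cover the space. All these `G` together form a countable open family such that any
`y ≠ x` lies in a member missing `x`. Finitely many of them cover the part of a compact set outside
a given neighbourhood of `x`, and removing finite unions of them from the members of the network
up to compact sets yields a network. In a charming space this applies to `Y` and to every `Uᶜ`,
whose diagonals are again `Gδ`.
-/

section NetworkModCompact

/-- A countable network modulo a compact cover: every point lies in a compact set `C` such that
each open set containing `C` contains a member of the countable family `𝒩` that contains `C`. The
compact cover of the usual formulation consists of the sets `C`. -/
def HasCountableNetworkModCompact (X : Type*) [TopologicalSpace X] : Prop :=
  ∃ 𝒩 : Set (Set X), 𝒩.Countable ∧ ∀ x : X, ∃ C : Set X, IsCompact C ∧ x ∈ C ∧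
    ∀ O : Set X, IsOpen O → C ⊆ O → ∃ N ∈ 𝒩, C ⊆ N ∧ N ⊆ O

variable {X Y Z : Type*} [TopologicalSpace X] [TopologicalSpace Y] [TopologicalSpace Z]

theorem hasCountableNetworkModCompact_of_isClosedMap [SecondCountableTopology Z] {g : Y → Z}
    (hg : IsClosedMap g) (hfiber : ∀ z, IsCompact (g ⁻¹' {z})) :
    HasCountableNetworkModCompact Y := by
  refine ⟨preimage g '' countableBasis Z, (countable_countableBasis Z).image _, fun y =>
    ⟨g ⁻¹' {g y}, hfiber (g y), rfl, fun O hO hfiberO => ?_⟩⟩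
  have hnear : ∀ᶠ z in nhds (g y), g ⁻¹' {z} ⊆ O :=
    hg.eventually_nhds_fiber (g y) fun y' hy' => hO.mem_nhds (hfiberO hy')
  obtain ⟨B, hB, hyB, hBO⟩ := (isBasis_countableBasis Z).mem_nhds_iff.1 hnear
  refine ⟨g ⁻¹' B, mem_image_of_mem _ hB, ?_, fun y' hy' => hBO hy' rfl⟩
  exact preimage_mono (singleton_subset_iff.2 hyB)

theorem HasCountableNetworkModCompact.of_surjective (hY : HasCountableNetworkModCompact Y)
    {f : Y → X} (hf : Continuous f) (hsurj : Surjective f) :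
    HasCountableNetworkModCompact X := by
  obtain ⟨𝒩, h𝒩, hnet⟩ := hY
  refine ⟨image f '' 𝒩, h𝒩.image _, hsurj.forall.2 fun y => ?_⟩
  obtain ⟨C, hC, hyC, hCnet⟩ := hnet y
  refine ⟨f '' C, hC.image hf, mem_image_of_mem f hyC, fun O hO hCO => ?_⟩
  obtain ⟨N, hN, hCN, hNO⟩ := hCnet (f ⁻¹' O) (hO.preimage hf) (image_subset_iff.1 hCO)
  exact ⟨f '' N, mem_image_of_mem _ hN, image_mono hCN, image_subset_iff.2 hNO⟩

theorem HasCountableNetworkModCompact.lindelofSpace (hX : HasCountableNetworkModCompact X) :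
    LindelofSpace X := by
  refine ⟨isLindelof_of_countable_subcover fun {ι} U hU hcover => ?_⟩
  obtain ⟨𝒩, h𝒩, hnet⟩ := hX
  let 𝒩fin : Set (Set X) := {N ∈ 𝒩 | ∃ t : Finset ι, N ⊆ ⋃ i ∈ t, U i}
  have hfin : ∀ N ∈ 𝒩fin, ∃ t : Finset ι, N ⊆ ⋃ i ∈ t, U i := fun N hN => hN.2
  choose! t ht using hfin
  refine ⟨⋃ N ∈ 𝒩fin, (t N : Set ι),
    (h𝒩.mono (sep_subset _ _)).biUnion fun N _ => (t N).countable_toSet, fun x _ => ?_⟩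
  obtain ⟨C, hC, hxC, hCnet⟩ := hnet x
  obtain ⟨s, hs⟩ := hC.elim_finite_subcover U hU ((subset_univ C).trans hcover)
  obtain ⟨N, hN, hCN, hNs⟩ := hCnet _ (isOpen_biUnion fun i _ => hU i) hs
  have hN𝒩fin : N ∈ 𝒩fin := ⟨hN, s, hNs⟩
  obtain ⟨i, hi, hxi⟩ := mem_iUnion₂.1 (ht N hN𝒩fin (hCN hxC))
  exact mem_iUnion₂.2 ⟨i, mem_iUnion₂.2 ⟨N, hN𝒩fin, hi⟩, hxi⟩

end NetworkModCompact

section Separating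

/-- A `T₁`-separating family of sets: for distinct `x` and `y`, some member contains `y` but
not `x`. -/
def IsT1Separating {X : Type*} (𝒰 : Set (Set X)) : Prop :=
  ∀ ⦃x y : X⦄, x ≠ y → ∃ U ∈ 𝒰, x ∉ U ∧ y ∈ U

variable {X Y : Type*} [TopologicalSpace X] [TopologicalSpace Y]

theorem isGδ_diagonal_of_injective (hX : IsGδ (diagonal X)) {f : Y → X} (hf : Continuous f)
    (hinj : Injective f) : IsGδ (diagonal Y) := by
  have hpreimage : Prod.map f f ⁻¹' diagonal X = diagonal Y := by
    ext ⟨a, b⟩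
    exact hinj.eq_iff
  exact hpreimage ▸ hX.preimage (hf.prodMap hf)

theorem exists_countable_isOpen_isT1Separating [LindelofSpace X] (hX : IsGδ (diagonal X)) :
    ∃ 𝒰 : Set (Set X), 𝒰.Countable ∧ (∀ U ∈ 𝒰, IsOpen U) ∧ IsT1Separating 𝒰 := by
  obtain ⟨W, hWopen, hW⟩ := isGδ_iff_eq_iInter_nat.1 hX
  have hsquare : ∀ n x, ∃ G : Set X, (x ∈ G ∧ IsOpen G) ∧ G ×ˢ G ⊆ W n := fun n x => by
    have hxW : (x, x) ∈ W n := mem_iInter.1 (hW ▸ mem_diagonal x) n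
    have hnhds := (hWopen n).mem_nhds hxW
    rw [nhds_prod_eq] at hnhds
    exact (nhds_basis_opens x).prod_self.mem_iff.1 hnhds
  choose G hG hGW using hsquare
  have hsubcover : ∀ n, ∃ t : Set X, t.Countable ∧ ⋃ x ∈ t, G n x = univ := fun n =>
    LindelofSpace.elim_nhds_subcover (G n) fun x => (hG n x).2.mem_nhds (hG n x).1
  choose t ht htcover using hsubcover
  refine ⟨⋃ n, G n '' t n, countable_iUnion fun n => (ht n).image _, ?_, fun x y hxy => ?_⟩
  · simp only [mem_iUnion, mem_image]
    rintro _ ⟨n, a, -, rfl⟩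
    exact (hG n a).2
  · have hxyW : (x, y) ∉ ⋂ n, W n := hW ▸ hxy
    obtain ⟨n, hn⟩ := not_forall.1 (mt mem_iInter.2 hxyW)
    obtain ⟨a, ha, hya⟩ := mem_iUnion₂.1 (htcover n ▸ mem_univ y)
    exact ⟨G n a, mem_iUnion.2 ⟨n, mem_image_of_mem _ ha⟩,
      fun hxa => hn (hGW n a ⟨hxa, hya⟩), hya⟩

theorem IsT1Separating.exists_finite_sUnion_cover {𝒰 : Set (Set X)} (h𝒰 : IsT1Separating 𝒰)
    (hopen : ∀ U ∈ 𝒰, IsOpen U) {K : Set X} (hK : IsCompact K) {x : X} (hx : x ∉ K) :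
    ∃ 𝒯 ⊆ 𝒰, 𝒯.Finite ∧ K ⊆ ⋃₀ 𝒯 ∧ x ∉ ⋃₀ 𝒯 := by
  have hcover : K ⊆ ⋃ U ∈ {U ∈ 𝒰 | x ∉ U}, U := fun y hy => by
    obtain ⟨U, hU, hxU, hyU⟩ := h𝒰 (ne_of_mem_of_not_mem hy hx).symm
    exact mem_biUnion (show U ∈ {U ∈ 𝒰 | x ∉ U} from ⟨hU, hxU⟩) hyU
  obtain ⟨𝒯, h𝒯, hfin, hK𝒯⟩ :=
    hK.elim_finite_subcover_image (c := id) (fun U hU => hopen U hU.1) hcover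
  refine ⟨𝒯, fun U hU => (h𝒯 hU).1, hfin, sUnion_eq_biUnion ▸ hK𝒯, ?_⟩
  rintro ⟨U, hU, hxU⟩
  exact (h𝒯 hU).2 hxU

theorem HasCountableNetworkModCompact.hasCountableNetwork (hX : HasCountableNetworkModCompact X)
    {𝒰 : Set (Set X)} (hcount : 𝒰.Countable) (hopen : ∀ U ∈ 𝒰, IsOpen U)
    (h𝒰 : IsT1Separating 𝒰) : HasCountableNetwork X := by
  obtain ⟨𝒩, h𝒩, hnet⟩ := hX
  refine ⟨image2 (fun N 𝒯 => N \ ⋃₀ 𝒯) 𝒩 {𝒯 | 𝒯.Finite ∧ 𝒯 ⊆ 𝒰},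
    h𝒩.image2 (countable_ofPred_finite_subset hcount) _, fun x V hV hxV => ?_⟩
  obtain ⟨C, hC, hxC, hCnet⟩ := hnet x
  obtain ⟨𝒯, h𝒯, hfin, hCV𝒯, hx𝒯⟩ :=
    h𝒰.exists_finite_sUnion_cover hopen (hC.diff hV) (fun hx => hx.2 hxV)
  have hVopen : IsOpen (⋃₀ 𝒯 ∪ V) := (isOpen_sUnion fun U hU => hopen U (h𝒯 hU)).union hV
  have hCsub : C ⊆ ⋃₀ 𝒯 ∪ V := (sdiff_subset_iff.1 hCV𝒯).trans_eq (union_comm V _)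
  obtain ⟨N, hN, hCN, hNV⟩ := hCnet _ hVopen hCsub
  exact ⟨N \ ⋃₀ 𝒯, mem_image2_of_mem hN ⟨hfin, h𝒯⟩, ⟨hCN hxC, hx𝒯⟩, sdiff_subset_iff.2 hNV⟩

end Separating

section LindelofSigma

variable {X : Type u} [TopologicalSpace X]

theorem IsLindelofSigma.hasCountableNetworkModCompact (hX : IsLindelofSigma X) :
    HasCountableNetworkModCompact X := by
  obtain ⟨Y, _, Z, _, _, ⟨f, hf, hfsurj⟩, g, ⟨-, hgclosed, hgfiber⟩, -⟩ := hX
  exact (hasCountableNetworkModCompact_of_isClosedMap hgclosed hgfiber).of_surjective hf hfsurj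

theorem IsLindelofSigma.hasCountableNetwork (hX : IsLindelofSigma X)
    (hdiag : IsGδ (diagonal X)) : HasCountableNetwork X := by
  have hnet := hX.hasCountableNetworkModCompact
  have := hnet.lindelofSpace
  obtain ⟨𝒰, hcount, hopen, h𝒰⟩ := exists_countable_isOpen_isT1Separating hdiag
  exact hnet.hasCountableNetwork hcount hopen h𝒰

theorem charming_gdelta_diagonal_is_22_structured_general (hX : IsCharming X)
    (hdiag : IsGδ (diagonal X)) :
    ∃ Y : Set X, HasCountableNetwork Y ∧
      ∀ U : Set X, IsOpen U → Y ⊆ U → HasCountableNetwork ↥(Uᶜ) := by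
  have hdiag_subtype (S : Set X) : IsGδ (diagonal S) :=
    isGδ_diagonal_of_injective hdiag continuous_subtype_val Subtype.val_injective
  obtain ⟨Y, hY, hcompl⟩ := hX
  exact ⟨Y, hY.hasCountableNetwork (hdiag_subtype Y), fun U hU hYU =>
    (hcompl U hU hYU).hasCountableNetwork (hdiag_subtype Uᶜ)⟩

end LindelofSigma

/-- A charming space with a `Gδ`-diagonal is `(2,2)`-structured. -/
theorem charming_gdelta_diagonal_is_22_structured {X : Type u} [TopologicalSpace X]
    [T35Space X] (hX : IsCharming X) (hdiag : IsGδ (Set.diagonal X)) :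
    ∃ Y : Set X, HasCountableNetwork Y ∧
      ∀ U : Set X, IsOpen U → Y ⊆ U → HasCountableNetwork ↥(Uᶜ) :=
  charming_gdelta_diagonal_is_22_structured_general hX hdiag
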